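/- For every f with 1 ≤ f and f+1 ≤ n and every agent a, the formula Byz_f ∧ B_{≥f+1}H_a⊥ → [¬H_a⊥ ∨ B_{≥f+1}H_a⊥]_a Byz_{f−1} is valid on the class KH: if at most f agents are faulty and at least f+1 agents believe agent a is faulty, then after publicly updating agent a's hope relation with ¬H_a⊥ ∨ B_{≥f+1}H_a⊥ (all other agents j updated trivially with ¬H_j⊥), at most f−1 agents are faulty. -/

import Mathlib

/-- A Kripke model (raw data): valuation, and knowledge and hope relations for `n` agents. -/
structure Model (n : ℕ) (W : Type) where
  val : ℕ → W → Prop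
  K : Fin n → W → W → Prop
  H : Fin n → W → W → Prop

/-- Membership in the class KH: each `K i` is an equivalence relation, each `H i` is
shift-serial, `H i ⊆ K i` (HinK), and oneH. -/
def Model.KH {n : ℕ} {W : Type} (M : Model n W) : Prop :=
  (∀ i, Equivalence (M.K i)) ∧
  (∀ i w v, M.H i w v → ∃ z, M.H i v z) ∧
  (∀ i w v, M.H i w v → M.K i w v) ∧
  (∀ i w v, (∃ x, M.H i w x) → (∃ x, M.H i v x) → M.K i w v → M.H i w v)

/-- Formulas of the language `L_KH^pub`: atoms, negation, conjunction, knowledge `K i`,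
hope `H i`, and public hope update `[φ_1,…,φ_n]ψ` (the tuple given as `Fin n → Form n`). -/
inductive Form (n : ℕ) : Type where
  | atom : ℕ → Form n
  | neg : Form n → Form n
  | and : Form n → Form n → Form n
  | know : Fin n → Form n → Form n
  | hope : Fin n → Form n → Form n
  | upd : (Fin n → Form n) → Form n → Form n

/-- Replace the hope relations: `w H_i^χ v` iff `w K_i v`, `c i` holds at `w`, and at `v`. -/
def Model.hopeUpd {n : ℕ} {W : Type} (M : Model n W) (c : Fin n → W → Prop) : Model n W where
  val := M.val
  K := M.K
  H := fun i w v => M.K i w v ∧ c i w ∧ c i v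

/-- Truth at a world. -/
def sat {n : ℕ} {W : Type} : Model n W → W → Form n → Prop
  | M, w, .atom p => M.val p w
  | M, w, .neg φ => ¬ sat M w φ
  | M, w, .and φ ψ => sat M w φ ∧ sat M w ψ
  | M, w, .know i φ => ∀ v, M.K i w v → sat M v φ
  | M, w, .hope i φ => ∀ v, M.H i w v → sat M v φ
  | M, w, .upd φs ψ => sat (M.hopeUpd (fun i v => sat M v (φs i))) w ψ

/-- The publicly updated model `M^{φ⃗}`. -/
def Model.pubUpdate {n : ℕ} {W : Type} (M : Model n W) (φs : Fin n → Form n) : Model n W :=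
  M.hopeUpd (fun i v => sat M v (φs i))

def ftop {n : ℕ} : Form n := .neg (.and (.atom 0) (.neg (.atom 0)))
def fbot {n : ℕ} : Form n := .neg ftop
def fimpl {n : ℕ} (φ ψ : Form n) : Form n := .neg (.and φ (.neg ψ))
def forr {n : ℕ} (φ ψ : Form n) : Form n := .neg (.and (.neg φ) (.neg ψ))
def fiff {n : ℕ} (φ ψ : Form n) : Form n := .and (fimpl φ ψ) (fimpl ψ φ)
/-- `¬H_i⊥`: agent `i` is correct. -/
def fcorrect {n : ℕ} (i : Fin n) : Form n := .neg (.hope i fbot)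

/-- Validity on the class KH: true at every world of every (nonempty) model in KH. -/
def Valid {n : ℕ} (φ : Form n) : Prop :=
  ∀ (W : Type) (M : Model n W), Nonempty W → M.KH → ∀ w : W, sat M w φ

/-- Conjunction of a list of formulas. -/
def bigAnd {n : ℕ} : List (Form n) → Form n
  | [] => ftop
  | φ :: l => .and φ (bigAnd l)

/-- Disjunction of a list of formulas. -/
def bigOr {n : ℕ} : List (Form n) → Form n
  | [] => fbot
  | φ :: l => forr φ (bigOr l)

/-- The list of all groups `G ⊆ A` of agents with `|G| = k`. -/
noncomputable def groups (n k : ℕ) : List (Finset (Fin n)) :=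
  ((Finset.univ : Finset (Fin n)).powerset.filter (fun G => G.card = k)).toList

/-- `Byz_f := ⋁_{G⊆A, |G|=n−f} ⋀_{i∈G} ¬H_i⊥`: at least `n−f` agents are correct,
i.e., at most `f` agents are faulty. -/
noncomputable def Byz (n f : ℕ) : Form n :=
  bigOr ((groups n (n - f)).map (fun G => bigAnd (G.toList.map (fun i => fcorrect i))))

/-- `φ⃗^k := ⋁_{G⊆A, |G|=k} ⋀_{i∈G} φ_i`: at least `k` of the formulas `φ_i` hold. -/
noncomputable def vecAtLeast {n : ℕ} (φs : Fin n → Form n) (k : ℕ) : Form n :=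
  bigOr ((groups n k).map (fun G => bigAnd (G.toList.map φs)))

/-- Belief: `B_i ψ := K_i(¬H_i⊥ → ψ)`. -/
def fbel {n : ℕ} (i : Fin n) (ψ : Form n) : Form n := .know i (fimpl (fcorrect i) ψ)

/-- `B_{≥f}ψ := ⋁_{G⊆A, |G|=f} ⋀_{i∈G} B_i ψ`: at least `f` agents believe `ψ`. -/
noncomputable def Bge (n f : ℕ) (ψ : Form n) : Form n :=
  bigOr ((groups n f).map (fun G => bigAnd (G.toList.map (fun i => fbel i ψ))))

/-!
Since at most `f` agents are faulty, one of the `f + 1` agents believing `H_a⊥` is correct, and by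
reflexivity of knowledge a correct agent is not mistaken in its beliefs: `a` really is faulty.
After the update an agent is correct exactly where its update formula held. At the current world
it held for `a` and for every agent that was correct before, so the update corrects `a` without
making any other agent faulty.
-/

section Semantics

variable {n : ℕ} {W : Type} {M : Model n W} {w : W}

@[simp]
theorem not_sat_fbot : ¬ sat M w fbot := by
  simp [fbot, ftop, sat]

@[simp]
theorem sat_fimpl {φ ψ : Form n} : sat M w (fimpl φ ψ) ↔ (sat M w φ → sat M w ψ) := by
  simp [fimpl, sat]

@[simp]
theorem sat_forr {φ ψ : Form n} : sat M w (forr φ ψ) ↔ sat M w φ ∨ sat M w ψ := by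
  simp [forr, sat, or_iff_not_imp_left]

theorem sat_bigAnd {l : List (Form n)} : sat M w (bigAnd l) ↔ ∀ φ ∈ l, sat M w φ := by
  induction l with
  | nil => simp [bigAnd, ftop, sat]
  | cons φ l ih => simp [bigAnd, sat, ih]

theorem sat_bigOr {l : List (Form n)} : sat M w (bigOr l) ↔ ∃ φ ∈ l, sat M w φ := by
  induction l with
  | nil => simp [bigOr]
  | cons φ l ih => simp [bigOr, ih]

theorem sat_vecAtLeast {φs : Fin n → Form n} {k : ℕ} :
    sat M w (vecAtLeast φs k) ↔ k ≤ {i | sat M w (φs i)}.ncard := by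
  classical
  rw [Set.ncard_eq_toFinset_card', Finset.le_card_iff_exists_subset_card]
  have sat_iff_exists_group : sat M w (vecAtLeast φs k) ↔
      ∃ G : Finset (Fin n), G.card = k ∧ ∀ i ∈ G, sat M w (φs i) := by
    simp [vecAtLeast, groups, sat_bigOr, sat_bigAnd]
  simp [sat_iff_exists_group, Finset.subset_iff, and_comm]

theorem sat_fcorrect {i : Fin n} : sat M w (fcorrect i) ↔ ∃ v, M.H i w v := by
  simp [fcorrect, sat]

theorem sat_bge {k : ℕ} {ψ : Form n} :
    sat M w (Bge n k ψ) ↔ k ≤ {i | sat M w (fbel i ψ)}.ncard :=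
  sat_vecAtLeast

/-- The set of agents that are faulty at `w`, i.e. the agents `i` with `H_i⊥` true there. -/
def Model.faulty (M : Model n W) (w : W) : Set (Fin n) :=
  {i | sat M w (.hope i fbot)}

theorem Model.notMem_faulty {i : Fin n} : i ∉ M.faulty w ↔ sat M w (fcorrect i) :=
  Iff.rfl

theorem sat_byz {f : ℕ} : sat M w (Byz n f) ↔ (M.faulty w).ncard ≤ f := by
  have card_add_compl : (M.faulty w).ncard + (M.faulty w)ᶜ.ncard = n := by
    simpa using Set.ncard_add_ncard_compl (M.faulty w)
  have sat_iff : sat M w (Byz n f) ↔ n - f ≤ (M.faulty w)ᶜ.ncard := sat_vecAtLeast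
  rw [sat_iff]
  omega

end Semantics

section Correction

variable {n f : ℕ} {W : Type} {M : Model n W} {w : W}

theorem sat_of_sat_fbel {i : Fin n} {ψ : Form n} (hK : M.K i w w)
    (hbel : sat M w (fbel i ψ)) (hcorrect : sat M w (fcorrect i)) : sat M w ψ :=
  sat_fimpl.mp (hbel w hK) hcorrect

theorem exists_correct_believer {k : ℕ} {ψ : Form n} (hfk : f < k)
    (hbyz : sat M w (Byz n f)) (hbge : sat M w (Bge n k ψ)) :
    ∃ i, sat M w (fbel i ψ) ∧ sat M w (fcorrect i) := by
  have ncard_lt : (M.faulty w).ncard < {i | sat M w (fbel i ψ)}.ncard :=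
    (sat_byz.mp hbyz).trans_lt (hfk.trans_le (sat_bge.mp hbge))
  obtain ⟨i, hbel, hi⟩ := Set.exists_mem_notMem_of_ncard_lt_ncard ncard_lt
  exact ⟨i, hbel, Model.notMem_faulty.mp hi⟩

theorem sat_of_sat_bge {k : ℕ} {ψ : Form n} (hK : ∀ i, M.K i w w) (hfk : f < k)
    (hbyz : sat M w (Byz n f)) (hbge : sat M w (Bge n k ψ)) : sat M w ψ := by
  obtain ⟨i, hbel, hcorrect⟩ := exists_correct_believer hfk hbyz hbge
  exact sat_of_sat_fbel (hK i) hbel hcorrect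

theorem sat_fcorrect_pubUpdate {φs : Fin n → Form n} {i : Fin n} (hK : M.K i w w) :
    sat (M.pubUpdate φs) w (fcorrect i) ↔ sat M w (φs i) :=
  sat_fcorrect.trans ⟨fun ⟨_, _, hφ, _⟩ => hφ, fun hφ => ⟨w, hK, hφ, hφ⟩⟩

theorem faulty_pubUpdate_subset {φs : Fin n → Form n} {a : Fin n} (hK : ∀ i, M.K i w w)
    (ha : sat M w (φs a)) (hφs : ∀ i ≠ a, sat M w (fcorrect i) → sat M w (φs i)) :
    (M.pubUpdate φs).faulty w ⊆ M.faulty w \ {a} := by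
  intro i hfaulty
  have not_sat : ¬ sat M w (φs i) := fun hφ =>
    Model.notMem_faulty.mpr ((sat_fcorrect_pubUpdate (hK i)).mpr hφ) hfaulty
  have ne_a : i ≠ a := fun hia => not_sat (hia ▸ ha)
  have faulty_before : i ∈ M.faulty w := by
    by_contra hcorrect
    exact not_sat (hφs i ne_a (Model.notMem_faulty.mp hcorrect))
  exact ⟨faulty_before, ne_a⟩

theorem sat_byz_sub_one_pubUpdate {φs : Fin n → Form n} {a : Fin n} (hK : ∀ i, M.K i w w)
    (hbyz : sat M w (Byz n f)) (hfaulty : a ∈ M.faulty w)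
    (ha : sat M w (φs a)) (hφs : ∀ i ≠ a, sat M w (fcorrect i) → sat M w (φs i)) :
    sat (M.pubUpdate φs) w (Byz n (f - 1)) :=
  sat_byz.mpr <| calc
    ((M.pubUpdate φs).faulty w).ncard
      ≤ (M.faulty w \ {a}).ncard := Set.ncard_le_ncard (faulty_pubUpdate_subset hK ha hφs)
    _ = (M.faulty w).ncard - 1 := Set.ncard_sdiff_singleton_of_mem hfaulty
    _ ≤ f - 1 := Nat.sub_le_sub_right (sat_byz.mp hbyz) 1

theorem byz_correction_general (a : Fin n) (hK : ∀ i, M.K i w w) :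
    sat M w (fimpl (.and (Byz n f) (Bge n (f + 1) (.hope a fbot)))
      (.upd (fun j => if j = a then forr (fcorrect a) (Bge n (f + 1) (.hope a fbot))
                      else fcorrect j)
        (Byz n (f - 1)))) := by
  refine sat_fimpl.mpr fun ⟨hbyz, hbge⟩ => ?_
  have hfaulty : a ∈ M.faulty w := sat_of_sat_bge hK f.lt_succ_self hbyz hbge
  refine sat_byz_sub_one_pubUpdate hK hbyz hfaulty ?_ fun i hia hcorrect => ?_
  · simp [hbge]
  · simpa [hia] using hcorrect

end Correction

/-- for `1 ≤ f` and `f+1 ≤ n` and any agent `a`, the formula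
`Byz_f ∧ B_{≥f+1}H_a⊥ → [¬H_a⊥ ∨ B_{≥f+1}H_a⊥]_a Byz_{f−1}` is valid on KH, where
`[φ]_a ψ` is the public update with `φ_a = φ` and `φ_j = ¬H_j⊥` for `j ≠ a`. -/
theorem byz_correction {n f : ℕ} (hn : 0 < n) (hf1 : 1 ≤ f) (hfn : f + 1 ≤ n) (a : Fin n) :
    Valid (fimpl (.and (Byz n f) (Bge n (f + 1) (.hope a fbot)))
      (.upd (fun j => if j = a then forr (fcorrect a) (Bge n (f + 1) (.hope a fbot))
                      else fcorrect j)
        (Byz n (f - 1)))) :=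
  fun _ _ _ hKH w => byz_correction_general a fun i => (hKH.1 i).refl w
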